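/- arXiv:2110.05349 — 2 statements merged into one kernel-verified Lean document; each statement's English description precedes it below -/
import Mathlib

section
/- For every odd r ≥ 3, the grid hypergraph H_r is not positive. -/
open MeasureTheory
open scoped Classical

/-- Homomorphism density of a symmetric `r`-variable kernel in an `r`-graph whose
edges are indexed by `E` and given as (injective) `r`-tuples of vertices:
`t_H(f) = ∫ ∏_{e ∈ E(H)} f(x_{e 0}, …, x_{e (r-1)}) dx`. -/
noncomputable def hypDensity {V E : Type} [Fintype V] [Fintype E] (r : ℕ)
    (edge : E → Fin r → V) (f : (Fin r → unitInterval) → ℝ) : ℝ :=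
  ∫ x : V → unitInterval, ∏ e : E, f (fun i => x (edge e i))

/-- An `r`-graph is positive if `t_H(f) ≥ 0` for every bounded measurable
symmetric kernel `f : [0,1]^r → ℝ`. -/
def HypPositive {V E : Type} [Fintype V] [Fintype E] (r : ℕ)
    (edge : E → Fin r → V) : Prop :=
  ∀ f : (Fin r → unitInterval) → ℝ,
    (∀ (σ : Equiv.Perm (Fin r)) (v : Fin r → unitInterval), f (v ∘ σ) = f v) →
    Measurable f → (∃ C, ∀ v, |f v| ≤ C) →
    0 ≤ hypDensity r edge f

/-- The vertex set of an edge of an `r`-graph. -/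
noncomputable def hedgeSet {V E : Type} [Fintype V] (r : ℕ) (edge : E → Fin r → V) (e : E) :
    Finset V :=
  Finset.image (edge e) Finset.univ
/-- The edges of the `r × r` grid `r`-graph `H_r`: its vertices are the nodes of an
`r × r` grid, `Sum.inl i` is the `i`-th row and `Sum.inr j` is the `j`-th column. -/
def gridEdge (r : ℕ) : (Fin r ⊕ Fin r) → Fin r → Fin r × Fin r
  | Sum.inl i => fun j => (i, j)
  | Sum.inr j => fun i => (i, j)

namespace GridAux

/-- labels `(I, J, A, B)` -/
abbrev Lab (r : ℕ) := Fin r × Fin r × Fin r × Fin r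

/-- sign of a self-map, zero if it is not bijective -/
noncomputable def sg {r : ℕ} (u : Fin r → Fin r) : ℝ :=
  Matrix.det ((1 : Matrix (Fin r) (Fin r) ℝ).submatrix u id)

lemma sg_comp {r : ℕ} (u : Fin r → Fin r) (σ : Equiv.Perm (Fin r)) :
    sg (fun k => u (σ k)) = ((Equiv.Perm.sign σ : ℤ) : ℝ) * sg u := by
  unfold sg
  rw [← Matrix.det_permute]
  rfl

lemma sg_inj {r : ℕ} (u : Fin r → Fin r) (h : sg u ≠ 0) : Function.Injective u := by
  intro a b hab
  by_contra hne
  apply h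
  unfold sg
  refine Matrix.det_zero_of_row_eq hne ?_
  funext k
  rw [Matrix.submatrix_apply, Matrix.submatrix_apply, hab]

lemma sg_id {r : ℕ} : sg (fun k : Fin r => k) = 1 := by
  unfold sg
  have : (fun k : Fin r => k) = id := rfl
  rw [this, Matrix.submatrix_id_id, Matrix.det_one]

/-- indicator of constant `I = A` -/
noncomputable def ind {r : ℕ} (u v : Fin r → Fin r) : ℝ :=
  if ∃ i, ∀ k, u k = i ∧ v k = i then 1 else 0

/-- row-type kernel -/
noncomputable def R {r : ℕ} (l : Fin r → Lab r) : ℝ :=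
  ind (fun k => (l k).1) (fun k => (l k).2.2.1) *
    (sg (fun k => (l k).2.1) * sg (fun k => (l k).2.2.2))

/-- the symmetry swapping the roles -/
def tau {r : ℕ} (a : Lab r) : Lab r := (a.2.1, a.1, a.2.2.2, a.2.2.1)

lemma tau_tau {r : ℕ} (a : Lab r) : tau (tau a) = a := rfl

/-- column-type kernel -/
noncomputable def C {r : ℕ} (l : Fin r → Lab r) : ℝ := R (fun k => tau (l k))

lemma R_comp {r : ℕ} (l : Fin r → Lab r) (σ : Equiv.Perm (Fin r)) :
    R (fun k => l (σ k)) = R l := by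
  unfold R
  have h1 : (∃ i, ∀ k, (l (σ k)).1 = i ∧ (l (σ k)).2.2.1 = i) ↔
      (∃ i, ∀ k, (l k).1 = i ∧ (l k).2.2.1 = i) := by
    constructor
    · rintro ⟨i, h⟩
      exact ⟨i, fun k => by simpa using h (σ.symm k)⟩
    · rintro ⟨i, h⟩
      exact ⟨i, fun k => h _⟩
  have h3 : ind (fun k => (l (σ k)).1) (fun k => (l (σ k)).2.2.1) =
      ind (fun k => (l k).1) (fun k => (l k).2.2.1) := by
    unfold ind
    simp only [h1]
  rw [h3, sg_comp (fun k => (l k).2.1), sg_comp (fun k => (l k).2.2.2)]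
  have h2 : ((Equiv.Perm.sign σ : ℤ) : ℝ) * ((Equiv.Perm.sign σ : ℤ) : ℝ) = 1 := by
    rcases Int.units_eq_one_or (Equiv.Perm.sign σ) with h | h <;> simp [h]
  linear_combination (ind (fun k => (l k).1) (fun k => (l k).2.2.1) *
    (sg (fun k => (l k).2.1) * sg (fun k => (l k).2.2.2))) * h2

lemma C_comp {r : ℕ} (l : Fin r → Lab r) (σ : Equiv.Perm (Fin r)) :
    C (fun k => l (σ k)) = C l := R_comp (fun k => tau (l k)) σ

lemma R_ne {r : ℕ} {l : Fin r → Lab r} (h : R l ≠ 0) :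
    (∃ i, ∀ k, (l k).1 = i ∧ (l k).2.2.1 = i) ∧ Function.Injective (fun k => (l k).2.1) := by
  unfold R at h
  constructor
  · by_contra hn
    simp [ind, hn] at h
  · apply sg_inj
    intro h0
    simp [h0] at h

lemma C_ne {r : ℕ} {l : Fin r → Lab r} (h : C l ≠ 0) :
    (∃ i, ∀ k, (l k).2.1 = i ∧ (l k).2.2.2 = i) ∧ Function.Injective (fun k => (l k).1) :=
  R_ne (l := fun k => tau (l k)) h

lemma RC {r : ℕ} (hr : 3 ≤ r) (l : Fin r → Lab r) (h : R l ≠ 0) (h' : C l ≠ 0) : False := by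
  obtain ⟨⟨i, hi⟩, _⟩ := R_ne h
  obtain ⟨_, hj⟩ := C_ne h'
  have := @hj ⟨0, by omega⟩ ⟨1, by omega⟩ (by simp [(hi _).1])
  simp at this

lemma mixed {r : ℕ} (hr : 3 ≤ r) (M : Fin r → Fin r → Lab r) (i i' : Fin r)
    (h : R (M i) ≠ 0) (h' : C (M i') ≠ 0) :
    ∃ j, R (fun k => M k j) = 0 ∧ C (fun k => M k j) = 0 := by
  obtain ⟨⟨i0, hi⟩, hJ⟩ := R_ne h
  obtain ⟨⟨j1, hj⟩, hI⟩ := C_ne h'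
  by_contra hn
  push Not at hn
  have key : ∀ j, (M i' j).1 = i0 ∨ (M i j).2.1 = j1 := by
    intro j
    by_cases hR : R (fun k => M k j) = 0
    · right
      obtain ⟨⟨j2, h2⟩, _⟩ := C_ne (hn j hR)
      rw [(h2 i).1, ← (h2 i').1, (hj j).1]
    · left
      obtain ⟨⟨j2, h2⟩, _⟩ := R_ne hR
      rw [(h2 i').1, ← (h2 i).1, (hi j).1]
  have a1 : ∀ j k, (M i' j).1 = i0 → (M i' k).1 = i0 → j = k := fun j k e1 e2 =>
    hI (by simp [e1, e2])
  have a2 : ∀ j k, (M i j).2.1 = j1 → (M i k).2.1 = j1 → j = k := fun j k e1 e2 =>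
    hJ (by simp [e1, e2])
  have n01 : (⟨0, by omega⟩ : Fin r) ≠ ⟨1, by omega⟩ := by simp
  have n02 : (⟨0, by omega⟩ : Fin r) ≠ ⟨2, by omega⟩ := by simp
  have n12 : (⟨1, by omega⟩ : Fin r) ≠ ⟨2, by omega⟩ := by simp
  have k0 := key ⟨0, by omega⟩
  have k1 := key ⟨1, by omega⟩
  have k2 := key ⟨2, by omega⟩
  rcases k0 with k0 | k0 <;> rcases k1 with k1 | k1 <;> rcases k2 with k2 | k2 <;>
    first
    | exact n01 (a1 _ _ k0 k1)
    | exact n02 (a1 _ _ k0 k2)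
    | exact n12 (a1 _ _ k1 k2)
    | exact n01 (a2 _ _ k0 k1)
    | exact n02 (a2 _ _ k0 k2)
    | exact n12 (a2 _ _ k1 k2)

/-- one-sided expansion -/
lemma half {r : ℕ} (hr : 3 ≤ r) (hodd : Odd r) (M : Fin r → Fin r → Lab r) (Y : ℝ)
    (hY : ∀ i i', R (M i) ≠ 0 → C (M i') ≠ 0 → Y = 0) :
    (∏ i, (R (M i) - C (M i))) * Y = (∏ i, R (M i)) * Y - (∏ i, C (M i)) * Y := by
  have i0 : Fin r := ⟨0, by omega⟩
  by_cases hR : ∃ i, R (M i) ≠ 0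
  · by_cases hC : ∃ i, C (M i) ≠ 0
    · obtain ⟨i, hi⟩ := hR
      obtain ⟨i', hi'⟩ := hC
      simp [hY i i' hi hi']
    · push Not at hC
      have : ∏ i, C (M i) = 0 := Finset.prod_eq_zero (Finset.mem_univ i0) (hC i0)
      rw [this]
      simp only [hC, sub_zero, zero_mul]
  · push Not at hR
    have : ∏ i, R (M i) = 0 := Finset.prod_eq_zero (Finset.mem_univ i0) (hR i0)
    rw [this]
    simp only [hR, zero_sub, Finset.prod_neg, Finset.card_univ, Fintype.card_fin, hodd.neg_one_pow]
    ring

lemma expand {r : ℕ} (hr : 3 ≤ r) (hodd : Odd r) (M : Fin r → Fin r → Lab r) :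
    (∏ i, (R (M i) - C (M i))) * (∏ j, (R (fun k => M k j) - C (fun k => M k j))) =
    (∏ i, R (M i)) * (∏ j, R (fun k => M k j)) - (∏ i, R (M i)) * (∏ j, C (fun k => M k j))
    - (∏ i, C (M i)) * (∏ j, R (fun k => M k j))
    + (∏ i, C (M i)) * (∏ j, C (fun k => M k j)) := by
  rw [half hr hodd M]
  · have key : ∀ Z : ℝ, (∀ i i', R (fun k => M k i) ≠ 0 → C (fun k => M k i') ≠ 0 → Z = 0) →
        Z * (∏ j, (R (fun k => M k j) - C (fun k => M k j))) =
        Z * (∏ j, R (fun k => M k j)) - Z * (∏ j, C (fun k => M k j)) := by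
      intro Z hZ
      have := half hr hodd (fun j k => M k j) Z hZ
      linarith
    rw [key, key]
    · ring
    · intro i i' h h'
      obtain ⟨j, h1, h2⟩ := mixed hr (fun j k => M k j) i i' h h'
      exact Finset.prod_eq_zero (Finset.mem_univ j) h2
    · intro i i' h h'
      obtain ⟨j, h1, h2⟩ := mixed hr (fun j k => M k j) i i' h h'
      exact Finset.prod_eq_zero (Finset.mem_univ j) h1
  · intro i i' h h'
    obtain ⟨j, h1, h2⟩ := mixed hr M i i' h h'
    exact Finset.prod_eq_zero (Finset.mem_univ j) (by rw [h1, h2, sub_zero])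

/-- swap the `B` components by a row permutation -/
def swapB {r : ℕ} (σ : Equiv.Perm (Fin r)) (M : Fin r × Fin r → Lab r) : Fin r × Fin r → Lab r :=
  fun p => ((M p).1, (M p).2.1, (M p).2.2.1, (M (σ p.1, p.2)).2.2.2)

lemma sum_RR {r : ℕ} (hr : 3 ≤ r) (hodd : Odd r) :
    ∑ M : Fin r × Fin r → Lab r,
      (∏ i, R (fun k => M (i, k))) * (∏ j, R (fun k => M (k, j))) = 0 := by
  set σ : Equiv.Perm (Fin r) := Equiv.swap ⟨0, by omega⟩ ⟨1, by omega⟩ with hσ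
  have hs : Equiv.Perm.sign σ = -1 := Equiv.Perm.sign_swap (by simp)
  have hinv : Function.Involutive (swapB σ) := by
    intro M
    funext p
    simp [swapB, hσ]
  set X : (Fin r × Fin r → Lab r) → ℝ := fun M =>
    (∏ i, R (fun k => M (i, k))) * (∏ j, R (fun k => M (k, j))) with hX
  have h1 : ∑ M, X (swapB σ M) = ∑ M, X M :=
    Equiv.sum_comp hinv.toPerm X
  have h2 : ∀ M, X (swapB σ M) = - X M := by
    intro M
    simp only [hX, R, swapB, Finset.prod_mul_distrib]
    have e1 : ∏ i, sg (fun k => (M (σ i, k)).2.2.2) = ∏ i, sg (fun k => (M (i, k)).2.2.2) :=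
      Equiv.prod_comp σ (fun i => sg (fun k => (M (i, k)).2.2.2))
    have e2 : ∏ j, sg (fun k => (M (σ k, j)).2.2.2) = - ∏ j, sg (fun k => (M (k, j)).2.2.2) := by
      have : ∀ j, sg (fun k => (M (σ k, j)).2.2.2) = - sg (fun k => (M (k, j)).2.2.2) := by
        intro j
        rw [sg_comp (fun k => (M (k, j)).2.2.2), hs]
        simp
      simp only [this, Finset.prod_neg, Finset.card_univ, Fintype.card_fin, hodd.neg_one_pow]
      ring
    rw [e1, e2]
    ring
  simp only [h2, Finset.sum_neg_distrib] at h1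
  linarith

lemma sum_CC {r : ℕ} (hr : 3 ≤ r) (hodd : Odd r) :
    ∑ M : Fin r × Fin r → Lab r,
      (∏ i, C (fun k => M (i, k))) * (∏ j, C (fun k => M (k, j))) = 0 := by
  have hinv : Function.Involutive (fun (M : Fin r × Fin r → Lab r) p => tau (M p)) := by
    intro M
    rfl
  rw [← sum_RR hr hodd]
  exact Equiv.sum_comp hinv.toPerm (fun M : Fin r × Fin r → Lab r =>
    (∏ i, R (fun k => M (i, k))) * (∏ j, R (fun k => M (k, j))))

lemma R_nonneg {r : ℕ} (l : Fin r → Lab r) (h : ∀ k, (l k).2.1 = (l k).2.2.2) : 0 ≤ R l := by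
  unfold R
  simp only [h]
  exact mul_nonneg (by unfold ind; split_ifs <;> simp) (mul_self_nonneg _)

lemma C_nonneg {r : ℕ} (l : Fin r → Lab r) (h : ∀ k, (l k).1 = (l k).2.2.1) : 0 ≤ C l :=
  R_nonneg _ h

lemma RC_nonneg {r : ℕ} (M : Fin r → Fin r → Lab r) :
    0 ≤ (∏ i, R (M i)) * (∏ j, C (fun k => M k j)) := by
  by_cases h : (∏ i, R (M i)) * (∏ j, C (fun k => M k j)) = 0
  · exact h.ge
  · have h1 := Finset.prod_ne_zero_iff.1 (left_ne_zero_of_mul h)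
    have h2 := Finset.prod_ne_zero_iff.1 (right_ne_zero_of_mul h)
    refine mul_nonneg (Finset.prod_nonneg fun i _ => R_nonneg _ ?_)
      (Finset.prod_nonneg fun j _ => C_nonneg _ ?_)
    · intro k
      obtain ⟨⟨a, ha⟩, _⟩ := C_ne (h2 k (Finset.mem_univ _))
      rw [(ha i).1, (ha i).2]
    · intro k
      obtain ⟨⟨a, ha⟩, _⟩ := R_ne (h1 k (Finset.mem_univ _))
      rw [(ha j).1, (ha j).2]

lemma R_one {r : ℕ} (i : Fin r) : R (fun k => ((i, k, i, k) : Lab r)) = 1 := by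
  unfold R
  rw [ind, if_pos ⟨i, fun _ => ⟨rfl, rfl⟩⟩, sg_id]
  norm_num

lemma C_one {r : ℕ} (i : Fin r) : C (fun k => ((k, i, k, i) : Lab r)) = 1 := R_one i

/-- the kernel on labels -/
noncomputable def g {r : ℕ} (l : Fin r → Lab r) : ℝ := R l - C l

lemma sum_neg {r : ℕ} (hr : 3 ≤ r) (hodd : Odd r) :
    ∑ M : Fin r × Fin r → Lab r,
      (∏ i, g (fun k => M (i, k))) * (∏ j, g (fun k => M (k, j))) < 0 := by
  have h : ∀ M : Fin r × Fin r → Lab r, _ := fun M => expand hr hodd (fun i k => M (i, k))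
  simp only [g]
  simp only [h, Finset.sum_add_distrib, Finset.sum_sub_distrib, sum_RR hr hodd, sum_CC hr hodd]
  have p1 : 0 < ∑ M : Fin r × Fin r → Lab r,
      (∏ i, R (fun k => M (i, k))) * (∏ j, C (fun k => M (k, j))) := by
    refine Finset.sum_pos' (fun M _ => RC_nonneg (fun i k => M (i, k)))
      ⟨fun p => (p.1, p.2, p.1, p.2), Finset.mem_univ _, ?_⟩
    simp [R_one, C_one]
  have p2 : 0 ≤ ∑ M : Fin r × Fin r → Lab r,
      (∏ i, C (fun k => M (i, k))) * (∏ j, R (fun k => M (k, j))) := by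
    refine Finset.sum_nonneg fun M _ => ?_
    rw [mul_comm]
    exact RC_nonneg (fun i k => M (k, i))
  linarith

/-- uniform labelling of the unit interval -/
lemma exists_unif (L : Type) [Fintype L] [Nonempty L] [MeasurableSpace L]
    [MeasurableSingletonClass L] :
    ∃ (Φ : unitInterval → L) (c : ENNReal), Measurable Φ ∧ 0 < c.toReal ∧
      ∀ a, (volume : Measure unitInterval) (Φ ⁻¹' {a}) = c := by
  set N := Fintype.card L with hN
  have hNpos : 0 < N := Fintype.card_pos
  have hNR : (0 : ℝ) < N := by exact_mod_cast hNpos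
  let e : L ≃ Fin N := Fintype.equivFin L
  let d : ℕ → L := fun k => e.symm (if h : k < N then ⟨k, h⟩ else ⟨0, hNpos⟩)
  refine ⟨fun x => d ⌊(N : ℝ) * x⌋₊, ENNReal.ofReal (1 / N), ?_, ?_, ?_⟩
  · have : Measurable d := measurable_from_nat
    refine this.comp (Nat.measurable_floor.comp ?_)
    fun_prop
  · rw [ENNReal.toReal_ofReal (by positivity)]
    positivity
  · intro a
    set k : ℕ := (e a : ℕ) with hk
    have hkN : k < N := (e a).2
    have hkN' : (k : ℝ) + 1 ≤ N := by exact_mod_cast hkN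
    have hae : ((fun x : unitInterval => d ⌊(N : ℝ) * x⌋₊) ⁻¹' {a}) =ᵐ[volume]
        (Subtype.val ⁻¹' (Set.Ico ((k : ℝ) / N) ((k + 1) / N)) : Set unitInterval) := by
      have h1 : ∀ᵐ x : unitInterval, x ≠ 1 := by
        rw [ae_iff]; simp
      filter_upwards [h1] with x hx
      apply propext
      have hx1 : (x : ℝ) < 1 := lt_of_le_of_ne x.2.2 (fun h => hx (Subtype.ext h))
      have hx0 : 0 ≤ (x : ℝ) := x.2.1
      have hlt : ⌊(N : ℝ) * x⌋₊ < N := by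
        rw [Nat.floor_lt (by positivity)]
        nlinarith
      change d ⌊(N : ℝ) * x⌋₊ = a ↔ (k : ℝ) / N ≤ x ∧ (x : ℝ) < (k + 1) / N
      have : d ⌊(N : ℝ) * x⌋₊ = a ↔ ⌊(N : ℝ) * x⌋₊ = k := by
        simp only [d, hlt, dif_pos, Equiv.symm_apply_eq, hk, Fin.ext_iff]
      rw [this, Nat.floor_eq_iff (by positivity), div_le_iff₀ hNR, lt_div_iff₀ hNR,
        mul_comm (x : ℝ)]
    rw [measure_congr hae]
    have hsub : Set.Ico ((k : ℝ) / N) ((k + 1) / N) ⊆ Set.Icc 0 1 := by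
      intro y hy
      refine ⟨le_trans (by positivity) hy.1, hy.2.le.trans ?_⟩
      rw [div_le_one hNR]; exact hkN'
    rw [Measure.Subtype.volume_def, Measure.comap_apply _ Subtype.val_injective
      (fun s hs => MeasurableSet.subtype_image measurableSet_Icc hs) _
      (measurable_subtype_coe measurableSet_Ico), Subtype.image_preimage_coe,
      Set.inter_eq_right.2 hsub, Real.volume_Ico]
    congr 1
    ring

lemma integral_unif {V L : Type} [Fintype V] [Fintype L] [MeasurableSpace L]
    [MeasurableSingletonClass L] (Φ : unitInterval → L) (c : ENNReal) (hΦ : Measurable Φ)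
    (hc : ∀ a, (volume : Measure unitInterval) (Φ ⁻¹' {a}) = c) (P : (V → L) → ℝ) :
    ∫ x : V → unitInterval, P (fun v => Φ (x v)) =
      c.toReal ^ (Fintype.card V) * ∑ l : V → L, P l := by
  set ν : Measure L := Measure.map Φ volume with hν
  haveI : IsProbabilityMeasure ν := Measure.isProbabilityMeasure_map hΦ.aemeasurable
  have mp : MeasurePreserving (fun (x : V → unitInterval) v => Φ (x v)) volume
      (Measure.pi fun _ => ν) :=
    measurePreserving_pi (fun _ => (volume : Measure unitInterval)) (fun _ => ν)
      (fun _ => ⟨hΦ, rfl⟩)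
  have hP : Measurable P := measurable_of_finite P
  have h1 := integral_map (μ := (volume : Measure (V → unitInterval)))
    mp.measurable.aemeasurable (f := P) hP.aestronglyMeasurable
  rw [mp.map_eq] at h1
  rw [← h1, integral_fintype (Integrable.of_finite), Finset.mul_sum]
  refine Finset.sum_congr rfl fun l _ => ?_
  have : (Measure.pi fun _ : V => ν).real {l} = c.toReal ^ (Fintype.card V) := by
    rw [Measure.real, Measure.pi_singleton]
    have : ∀ a, ν {a} = c := fun a => by
      rw [hν, Measure.map_apply hΦ (measurableSet_singleton a), hc]
    simp [this]
  rw [this, smul_eq_mul]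

end GridAux

/-- **Proposition 5.** The grid hypergraph `H_r` is not positive for odd `r ≥ 3`. -/
theorem grid_hypergraph_not_positive (r : ℕ) (hr : 3 ≤ r) (hodd : Odd r) :
    ¬ HypPositive r (gridEdge r) := by
  intro hpos
  haveI : Nonempty (Fin r) := ⟨⟨0, by omega⟩⟩
  obtain ⟨Φ, c, hΦ, hc0, hc⟩ := GridAux.exists_unif (GridAux.Lab r)
  have hΦ' : Measurable (fun (v : Fin r → unitInterval) k => Φ (v k)) :=
    measurable_pi_lambda _ fun k => hΦ.comp (measurable_pi_apply k)
  have h := hpos (fun v => GridAux.g (fun k => Φ (v k))) ?_ ?_ ?_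
  · unfold hypDensity at h
    have e := GridAux.integral_unif Φ c hΦ hc
      (fun M : Fin r × Fin r → GridAux.Lab r =>
        (∏ i, GridAux.g (fun k => M (i, k))) * (∏ j, GridAux.g (fun k => M (k, j))))
    simp only [Fintype.prod_sum_type, gridEdge] at h
    rw [e] at h
    have := mul_neg_of_pos_of_neg (pow_pos hc0 (Fintype.card (Fin r × Fin r)))
      (GridAux.sum_neg hr hodd)
    refine absurd h (not_le.2 ?_)
    convert this
  · intro σ v
    simp only [GridAux.g, Function.comp]
    rw [GridAux.R_comp (fun k => Φ (v k)) σ, GridAux.C_comp (fun k => Φ (v k)) σ]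
  · exact (measurable_of_finite (GridAux.g (r := r))).comp hΦ'
  · refine ⟨∑ l : Fin r → GridAux.Lab r, |GridAux.g l|, fun v => ?_⟩
    exact Finset.single_le_sum (f := fun l : Fin r → GridAux.Lab r => |GridAux.g l|)
      (fun l _ => abs_nonneg _) (Finset.mem_univ (fun k => Φ (v k)))
end

section
/- For every odd r ≥ 3, the 1-subdivision of the complete bipartite graph K_{r,r} is not a positive graph. -/
open MeasureTheory
open scoped Classical

noncomputable section

/-- Homomorphism density of a symmetric kernel `f` in a finite simple graph `G`:
`t_G(f) = ∫ ∏_{{u,v} ∈ E(G)} f(x_u, x_v) dx`, with respect to Lebesgue measure on `[0,1]`. -/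
def graphDensity {V : Type} [Fintype V] (G : SimpleGraph V)
    (f : unitInterval → unitInterval → ℝ) (hf : ∀ a b, f a b = f b a) : ℝ :=
  ∫ x : V → unitInterval,
    ∏ e ∈ G.edgeFinset,
      Sym2.lift ⟨fun u v => f (x u) (x v), fun u v => hf (x u) (x v)⟩ e

/-- A finite simple graph is positive if `t_G(f) ≥ 0` for every bounded measurable
symmetric kernel `f : [0,1]² → ℝ`. -/
def GraphPositive {V : Type} [Fintype V] (G : SimpleGraph V) : Prop :=
  ∀ (f : unitInterval → unitInterval → ℝ) (hf : ∀ a b, f a b = f b a),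
    Measurable (fun p : unitInterval × unitInterval => f p.1 p.2) →
    (∃ C, ∀ a b, |f a b| ≤ C) →
    0 ≤ graphDensity G f hf

end
/-- The `1`-subdivision of the complete bipartite graph `K_{r,r}`: every edge
`{left i, right j}` of `K_{r,r}` is replaced by a path of length 2 through the
new vertex `(i, j)`. -/
def subdivisionKrr (r : ℕ) : SimpleGraph ((Fin r ⊕ Fin r) ⊕ Fin r × Fin r) :=
  SimpleGraph.fromRel (fun a b =>
    ∃ i j : Fin r, (a = Sum.inl (Sum.inl i) ∨ a = Sum.inl (Sum.inr j)) ∧ b = Sum.inr (i, j))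

lemma kr_exists_phi (U : Type) [Fintype U] [Nonempty U] :
    ∃ φ : unitInterval → U, ∀ u, MeasurableSet (φ ⁻¹' {u}) ∧
      volume (φ ⁻¹' {u}) = ENNReal.ofReal (1 / (Fintype.card U : ℝ)) := by
  set n := Fintype.card U with hn
  have hn0 : 0 < n := Fintype.card_pos
  have hnR : (0 : ℝ) < n := by exact_mod_cast hn0
  let e : U ≃ Fin n := Fintype.equivFin U
  let φ : unitInterval → U := fun t => e.symm ⟨min ⌊(n : ℝ) * t⌋₊ (n - 1), by omega⟩
  refine ⟨φ, fun u => ?_⟩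
  have hk := (e u).2
  set k : ℕ := (e u : ℕ) with hkdef
  have hmem : ∀ t, t ∈ φ ⁻¹' {u} ↔ min ⌊(n : ℝ) * t⌋₊ (n - 1) = k := by
    intro t
    simp only [φ, Set.mem_preimage, Set.mem_singleton_iff, Equiv.symm_apply_eq, Fin.ext_iff, hkdef]
  have hk1 : ((k : ℝ) + 1) ≤ n := by exact_mod_cast hk
  have hk0 : (0 : ℝ) ≤ k := Nat.cast_nonneg k
  let lo : unitInterval := ⟨k / n, by positivity, by rw [div_le_one hnR]; linarith⟩
  let hi : unitInterval := ⟨(k + 1) / n, by positivity, by rw [div_le_one hnR]; linarith⟩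
  by_cases hlast : k = n - 1
  · have : φ ⁻¹' {u} = Set.Ici lo := by
      ext t
      rw [hmem, Set.mem_Ici, ← Subtype.coe_le_coe, show ((lo : unitInterval) : ℝ) = k / n from rfl,
        div_le_iff₀ hnR, mul_comm (t : ℝ), ← Nat.le_floor_iff (by have := t.2.1; positivity)]
      omega
    rw [this]
    refine ⟨measurableSet_Ici, ?_⟩
    rw [unitInterval.volume_Ici]
    congr 1
    have h1 : (k : ℝ) + 1 = n := by
      have : k + 1 = n := by omega
      exact_mod_cast this
    show 1 - (k : ℝ) / n = 1 / n
    field_simp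
    linarith
  · have : φ ⁻¹' {u} = Set.Ico lo hi := by
      ext t
      rw [hmem, Set.mem_Ico, ← Subtype.coe_le_coe, ← Subtype.coe_lt_coe,
        show ((lo : unitInterval) : ℝ) = k / n from rfl,
        show ((hi : unitInterval) : ℝ) = (k + 1) / n from rfl,
        div_le_iff₀ hnR, lt_div_iff₀ hnR, mul_comm (t : ℝ),
        ← Nat.le_floor_iff (by have := t.2.1; positivity)]
      have : (n : ℝ) * t < k + 1 ↔ ⌊(n : ℝ) * t⌋₊ < k + 1 := by
        rw [Nat.floor_lt (by have := t.2.1; positivity)]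
        push_cast
        rfl
      rw [this]
      omega
    rw [this]
    refine ⟨measurableSet_Ico, ?_⟩
    rw [unitInterval.volume_Ico]
    congr 1
    show ((k : ℝ) + 1) / n - (k : ℝ) / n = 1 / n
    ring

lemma kr_integral_step {W U : Type} [Fintype W] [DecidableEq W] [Fintype U] [Nonempty U] (φ : unitInterval → U)
    (hφ : ∀ u, MeasurableSet (φ ⁻¹' {u}) ∧
      volume (φ ⁻¹' {u}) = ENNReal.ofReal (1 / (Fintype.card U : ℝ)))
    (P : (W → U) → ℝ) :
    ∫ x : W → unitInterval, P (fun v => φ (x v)) =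
      (1 / (Fintype.card U : ℝ)) ^ Fintype.card W * ∑ c : W → U, P c := by
  have h1 : ∀ x : W → unitInterval, P (fun v => φ (x v)) =
      ∑ c : W → U, (Set.pi Set.univ (fun v => φ ⁻¹' {c v})).indicator (fun _ => P c) x := by
    intro x
    rw [Finset.sum_eq_single (fun v => φ (x v))]
    · rw [Set.indicator_of_mem]
      intro v _
      simp
    · intro c _ hc
      rw [Set.indicator_of_notMem]
      intro hx
      apply hc
      funext v
      have := hx v (Set.mem_univ v)
      simp at this
      exact this.symm
    · simp
  have hms : ∀ c : W → U, MeasurableSet (Set.pi Set.univ (fun v => φ ⁻¹' {c v})) := by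
    intro c
    exact MeasurableSet.univ_pi (fun v => (hφ _).1)
  have hn0 : (0 : ℝ) ≤ 1 / (Fintype.card U : ℝ) := by positivity
  simp_rw [h1]
  rw [integral_finsetSum]
  · rw [Finset.mul_sum]
    refine Finset.sum_congr rfl fun c _ => ?_
    rw [integral_indicator_const _ (hms c), measureReal_def, volume_pi_pi]
    simp only [(hφ _).2, Finset.prod_const, ENNReal.toReal_pow, smul_eq_mul,
      ENNReal.toReal_ofReal hn0, Finset.card_univ]
  · intro c _
    exact (integrable_const _).indicator (hms c)

lemma kr_edge_prod (r : ℕ) (g : Sym2 ((Fin r ⊕ Fin r) ⊕ Fin r × Fin r) → ℝ) :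
    ∏ e ∈ (subdivisionKrr r).edgeFinset, g e =
      ∏ i : Fin r, ∏ j : Fin r, (g s(Sum.inl (Sum.inl i), Sum.inr (i, j)) *
        g s(Sum.inl (Sum.inr j), Sum.inr (i, j))) := by
  let h : (Fin r × Fin r) × Bool → Sym2 ((Fin r ⊕ Fin r) ⊕ Fin r × Fin r) := fun p =>
    if p.2 then s(Sum.inl (Sum.inl p.1.1), Sum.inr p.1) else s(Sum.inl (Sum.inr p.1.2), Sum.inr p.1)
  have hinj : Function.Injective h := by
    rintro ⟨⟨i, j⟩, b⟩ ⟨⟨i', j'⟩, b'⟩ hh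
    cases b <;> cases b' <;> simp [h] at hh ⊢ <;> tauto
  have himg : (subdivisionKrr r).edgeFinset = Finset.univ.image h := by
    ext e
    induction e using Sym2.ind with
    | _ a b =>
      have hadj : (subdivisionKrr r).Adj a b ↔ _ := SimpleGraph.fromRel_adj _ a b
      rw [SimpleGraph.mem_edgeFinset, SimpleGraph.mem_edgeSet, hadj]
      simp only [Finset.mem_image, Finset.mem_univ, true_and, h]
      constructor
      · rintro ⟨_, ⟨i, j, (rfl | rfl), rfl⟩ | ⟨i, j, (rfl | rfl), rfl⟩⟩
        · exact ⟨((i, j), true), by simp⟩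
        · exact ⟨((i, j), false), by simp⟩
        · exact ⟨((i, j), true), by simp⟩
        · exact ⟨((i, j), false), by simp⟩
      · rintro ⟨⟨⟨i, j⟩, b⟩, hb⟩
        cases b <;> simp at hb <;> rcases hb with ⟨rfl, rfl⟩ | ⟨rfl, rfl⟩ <;> simp
  rw [himg, Finset.prod_image hinj.injOn, ← Finset.univ_product_univ, Finset.prod_product,
    ← Finset.univ_product_univ, Finset.prod_product]
  simp [h]

lemma kr_step (r : ℕ) (hpos : GraphPositive (subdivisionKrr r)) (U : Type) [Fintype U] [Nonempty U]
    (F : U → U → ℝ) (hF : ∀ a b, F a b = F b a) :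
    0 ≤ ∑ x : Fin r → U, ∑ y : Fin r → U, ∏ i, ∏ j, ∑ z, F (x i) z * F z (y j) := by
  obtain ⟨φ, hφ⟩ := kr_exists_phi U
  let _ : MeasurableSpace U := ⊤
  have hφm : Measurable φ := measurable_to_countable' (fun u => (hφ u).1)
  have h0 := hpos (fun a b => F (φ a) (φ b)) (fun a b => hF _ _)
    (by
      have : Measurable (fun p : U × U => F p.1 p.2) := measurable_of_countable _
      exact this.comp ((hφm.comp measurable_fst).prodMk (hφm.comp measurable_snd)))
    (by
      refine ⟨∑ a, ∑ b, |F a b|, fun a b => ?_⟩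
      refine le_trans ?_ (Finset.single_le_sum (f := fun a => ∑ b, |F a b|)
        (fun _ _ => Finset.sum_nonneg fun _ _ => abs_nonneg _) (Finset.mem_univ (φ a)))
      exact Finset.single_le_sum (f := fun b => |F (φ a) b|) (fun _ _ => abs_nonneg _)
        (Finset.mem_univ (φ b)))
  unfold graphDensity at h0
  simp_rw [kr_edge_prod] at h0
  simp only [Sym2.lift_mk] at h0
  rw [kr_integral_step φ hφ (fun c => ∏ i : Fin r, ∏ j : Fin r,
    (F (c (Sum.inl (Sum.inl i))) (c (Sum.inr (i, j))) *
      F (c (Sum.inl (Sum.inr j))) (c (Sum.inr (i, j)))))] at h0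
  have hc : (0 : ℝ) < (1 / (Fintype.card U : ℝ)) ^
      Fintype.card ((Fin r ⊕ Fin r) ⊕ Fin r × Fin r) := by
    have : (0 : ℝ) < Fintype.card U := by exact_mod_cast Fintype.card_pos
    positivity
  have h1 := nonneg_of_mul_nonneg_right h0 hc
  refine le_of_le_of_eq h1 (Eq.symm ?_)
  rw [← (Equiv.sumArrowEquivProdArrow _ _ U).symm.sum_comp, Fintype.sum_prod_type,
    ← (Equiv.sumArrowEquivProdArrow _ _ U).symm.sum_comp, Fintype.sum_prod_type]
  refine Finset.sum_congr rfl fun x _ => Finset.sum_congr rfl fun y _ => ?_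
  simp only [Equiv.sumArrowEquivProdArrow_symm_apply_inl, Equiv.sumArrowEquivProdArrow_symm_apply_inr]
  rw [← Fintype.prod_prod_type' (f := fun i j => ∑ z, F (x i) z * F z (y j)), Fintype.prod_sum]
  refine Finset.sum_congr rfl fun z _ => ?_
  rw [Fintype.prod_prod_type]
  refine Finset.prod_congr rfl fun i _ => Finset.prod_congr rfl fun j _ => ?_
  rw [hF (z (i, j))]

open scoped MatrixOrder in
lemma kr_gram (r : ℕ) (hpos : GraphPositive (subdivisionKrr r)) (U S : Type) [Fintype U]
    [Nonempty U] [Fintype S] (V : U → S → ℝ) :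
    0 ≤ ∑ a : Fin r → Fin r → S,
      (∏ i, ∑ u, ∏ j, V u (a i j)) * (∏ j, ∑ u, ∏ i, V u (a i j)) := by
  let A : Matrix U U ℝ := (Matrix.of V) * (Matrix.of V).transpose
  have hA : A.PosSemidef := by
    simpa [A] using Matrix.posSemidef_self_mul_conjTranspose (Matrix.of V)
  let F : Matrix U U ℝ := CFC.sqrt A
  have hFF : F * F = A := CFC.sqrt_mul_sqrt_self A hA.nonneg
  have hFs : ∀ a b, F a b = F b a := by
    intro a b
    have := (Matrix.nonneg_iff_posSemidef.1 (CFC.sqrt_nonneg A)).1.apply b a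
    simpa using this
  have h := kr_step r hpos U F hFs
  have h2 : ∀ a b, ∑ z, F a z * F z b = ∑ s, V a s * V b s := by
    intro a b
    have := congrFun (congrFun hFF a) b
    simpa [A, Matrix.mul_apply] using this
  simp_rw [h2] at h
  refine le_of_le_of_eq h (Eq.symm ?_)
  have h3 : ∀ a : Fin r → Fin r → S,
      (∏ i, ∑ u, ∏ j, V u (a i j)) * (∏ j, ∑ u, ∏ i, V u (a i j)) =
      ∑ x : Fin r → U, ∑ y : Fin r → U, ∏ i, ∏ j, (V (x i) (a i j) * V (y j) (a i j)) := by
    intro a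
    rw [Fintype.prod_sum, Fintype.prod_sum, Finset.sum_mul_sum]
    refine Finset.sum_congr rfl fun x _ => Finset.sum_congr rfl fun y _ => ?_
    simp_rw [Finset.prod_mul_distrib]
    congr 1
    exact Finset.prod_comm
  simp_rw [h3]
  rw [Finset.sum_comm]
  refine Finset.sum_congr rfl fun x _ => ?_
  rw [Finset.sum_comm]
  refine Finset.sum_congr rfl fun y _ => ?_
  simp_rw [Fintype.prod_sum]

/-- The sign attached to a Boolean. -/
def krSg (b : Bool) : ℝ := if b then 1 else -1

/-- The number of permutations carrying `t` to `s`. -/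
noncomputable def krCnt {r : ℕ} {S : Type} (t s : Fin r → S) : ℕ :=
  (Finset.univ.filter (fun σ : Equiv.Perm (Fin r) => ∀ j, t (σ j) = s j)).card

lemma krSg_mul_self (b : Bool) : krSg b * krSg b = 1 := by cases b <;> simp [krSg]

lemma krSg_not (b : Bool) : krSg (!b) = - krSg b := by cases b <;> simp [krSg]

lemma kr_sign_sum {r : ℕ} (h : Fin r → Fin r) :
    ∑ ε : Fin r → Bool, (∏ i, krSg (ε i)) * ∏ j, krSg (ε (h j)) =
      if Function.Bijective h then (2 : ℝ) ^ r else 0 := by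
  split_ifs with hb
  · have : ∀ ε : Fin r → Bool, (∏ i, krSg (ε i)) * ∏ j, krSg (ε (h j)) = 1 := by
      intro ε
      rw [hb.prod_comp (fun i => krSg (ε i)), ← Finset.prod_mul_distrib]
      exact Finset.prod_eq_one fun i _ => krSg_mul_self _
    simp [this]
  · have hs : ¬ Function.Surjective h := fun h' => hb (Finite.surjective_iff_bijective.1 h')
    obtain ⟨i0, hi0⟩ : ∃ i0, ∀ j, h j ≠ i0 := by
      simpa [Function.Surjective] using hs
    refine Finset.sum_involution (fun ε _ => Function.update ε i0 (!ε i0)) ?_ ?_ ?_ ?_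
    · intro ε _
      have h1 : ∏ j, krSg (Function.update ε i0 (!ε i0) (h j)) = ∏ j, krSg (ε (h j)) :=
        Finset.prod_congr rfl fun j _ => by rw [Function.update_of_ne (hi0 j)]
      have h2 : ∏ i, krSg (Function.update ε i0 (!ε i0) i) = - ∏ i, krSg (ε i) := by
        rw [← Finset.mul_prod_erase _ _ (Finset.mem_univ i0),
          ← Finset.mul_prod_erase Finset.univ (fun i => krSg (ε i)) (Finset.mem_univ i0)]
        rw [Function.update_self, krSg_not, neg_mul]
        congr 2
        refine Finset.prod_congr rfl fun j hj => ?_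
        rw [Function.update_of_ne (Finset.ne_of_mem_erase hj)]
      rw [h1, h2]
      ring
    · intro ε _ _ heq
      have := congrFun heq i0
      simp at this
    · intro ε _
      exact Finset.mem_univ _
    · intro ε _
      simp

lemma kr_polar {r : ℕ} {S : Type} (t s : Fin r → S) :
    ∑ ε : Fin r → Bool, (∏ i, krSg (ε i)) *
      ∏ j, ∑ i, krSg (ε i) * (if t i = s j then (1 : ℝ) else 0) = 2 ^ r * krCnt t s := by
  have h1 : ∀ ε : Fin r → Bool, (∏ i, krSg (ε i)) *
      ∏ j, ∑ i, krSg (ε i) * (if t i = s j then (1 : ℝ) else 0) =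
      ∑ h : Fin r → Fin r, (∏ j, (if t (h j) = s j then (1 : ℝ) else 0)) *
        ((∏ i, krSg (ε i)) * ∏ j, krSg (ε (h j))) := by
    intro ε
    rw [Fintype.prod_sum, Finset.mul_sum]
    refine Finset.sum_congr rfl fun h _ => ?_
    rw [Finset.prod_mul_distrib]
    ring
  simp_rw [h1]
  rw [Finset.sum_comm]
  simp_rw [← Finset.mul_sum, kr_sign_sum]
  have h2 : ∀ h : Fin r → Fin r, (∏ j, (if t (h j) = s j then (1 : ℝ) else 0)) *
      (if Function.Bijective h then (2 : ℝ) ^ r else 0) =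
      if (Function.Bijective h ∧ ∀ j, t (h j) = s j) then (2 : ℝ) ^ r else 0 := by
    intro h
    rw [Finset.prod_ite_zero]
    by_cases hb : Function.Bijective h <;> by_cases hc : ∀ j, t (h j) = s j <;> simp [hc]
  simp_rw [h2]
  rw [← Finset.sum_filter, Finset.sum_const, nsmul_eq_mul, mul_comm]
  congr 2
  unfold krCnt
  symm
  refine Finset.card_bij (fun σ _ => σ) ?_ ?_ ?_
  · intro σ hσ
    simp only [Finset.mem_filter, Finset.mem_univ, true_and] at hσ ⊢
    exact ⟨σ.bijective, hσ⟩
  · intro σ _ τ _ h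
    exact DFunLike.coe_injective h
  · intro h hh
    simp only [Finset.mem_filter, Finset.mem_univ, true_and] at hh
    exact ⟨Equiv.ofBijective h hh.1, by simpa using hh.2, rfl⟩

lemma kr_odd_root {r : ℕ} (hr : Odd r) (c : ℝ) : ∃ y : ℝ, y ^ r = c := by
  have hr0 : r ≠ 0 := by rintro rfl; simp at hr
  rcases le_total 0 c with h | h
  · exact ⟨c ^ (1 / (r : ℝ)), by rw [one_div]; exact Real.rpow_inv_natCast_pow h hr0⟩
  · refine ⟨- ((-c) ^ (1 / (r : ℝ))), ?_⟩
    rw [hr.neg_pow, one_div, Real.rpow_inv_natCast_pow (by linarith) hr0]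
    ring

lemma kr_tensor (r : ℕ) (hodd : Odd r) (hpos : GraphPositive (subdivisionKrr r)) (T S : Type)
    [Fintype T] [Nonempty T] [Fintype S] (t : T → Fin r → S) (w : T → ℝ) (M : (Fin r → S) → ℝ)
    (hM : ∀ s, M s = ∑ τ, w τ * krCnt (t τ) s) :
    0 ≤ ∑ a : Fin r → Fin r → S, (∏ i, M (a i)) * (∏ j, M (fun i => a i j)) := by
  choose l hl using fun τ => kr_odd_root hodd (w τ / 2 ^ r)
  let V : T × (Fin r → Bool) → S → ℝ := fun u s =>
    l u.1 * (∏ i, krSg (u.2 i)) * ∑ i, krSg (u.2 i) * (if t u.1 i = s then (1 : ℝ) else 0)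
  have h := kr_gram r hpos (T × (Fin r → Bool)) S V
  have hV : ∀ s : Fin r → S, ∑ u, ∏ j, V u (s j) = M s := by
    intro s
    rw [hM, Fintype.sum_prod_type]
    refine Finset.sum_congr rfl fun τ _ => ?_
    have h1 : ∀ ε : Fin r → Bool, ∏ j, V (τ, ε) (s j) = (w τ / 2 ^ r) *
        ((∏ i, krSg (ε i)) * ∏ j, ∑ i, krSg (ε i) * (if t τ i = s j then (1 : ℝ) else 0)) := by
      intro ε
      simp only [V]
      rw [Finset.prod_mul_distrib, Finset.prod_const, Finset.card_univ, Fintype.card_fin, mul_pow,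
        hl, mul_assoc]
      congr 2
      rw [← Finset.prod_pow]
      refine Finset.prod_congr rfl fun i _ => ?_
      cases ε i
      · simp [krSg, hodd.neg_pow]
      · simp [krSg]
    simp_rw [h1]
    rw [← Finset.mul_sum, kr_polar]
    field_simp
  refine le_of_le_of_eq h ?_
  refine Finset.sum_congr rfl fun a _ => ?_
  congr 1
  · exact Finset.prod_congr rfl fun i _ => hV (a i)
  · exact Finset.prod_congr rfl fun j _ => hV (fun i => a i j)

/-- Symbols: indexed block symbols, or fill symbols. -/
abbrev KrS (N : ℕ) : Type := (Bool × Bool × Fin N) ⊕ Option (Bool × Bool)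

/-- Line types. -/
abbrev KrT (N : ℕ) : Type := (Bool × Bool × Fin N) ⊕ Bool

/-- Block symbol seen from orientation `o`. -/
def krX {N : ℕ} (o b c : Bool) (k : Fin N) : KrS N :=
  if o then Sum.inl (c, b, k) else Sum.inl (b, c, k)

/-- First special symbol of a line type. -/
def krU {N : ℕ} : KrT N → KrS N
  | Sum.inl (o, b, k) => krX o b false k
  | Sum.inr o => Sum.inr (some (o, false))

/-- Second special symbol of a line type. -/
def krV {N : ℕ} : KrT N → KrS N
  | Sum.inl (o, b, k) => krX o b true k
  | Sum.inr o => Sum.inr (some (o, true))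

/-- Repeated symbol of a line type. -/
def krW {N : ℕ} : KrT N → KrS N
  | Sum.inl (o, b, _) => Sum.inr (some (o, b))
  | Sum.inr _ => Sum.inr none

/-- The standard ordered line of a given type. -/
def krt {r N : ℕ} (τ : KrT N) : Fin r → KrS N :=
  fun i => if i.val = 0 then krU τ else if i.val = 1 then krV τ else krW τ

/-- A line is of the given type. -/
def KrLn {r N : ℕ} (τ : KrT N) (s : Fin r → KrS N) : Prop :=
  ∃ i j, i ≠ j ∧ s i = krU τ ∧ s j = krV τ ∧ ∀ l, l ≠ i → l ≠ j → s l = krW τ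

lemma kr_cnt_ln {r N : ℕ} (hr : 3 ≤ r) (τ : KrT N) (s : Fin r → KrS N) (h : krCnt (krt τ) s ≠ 0) :
    KrLn τ s := by
  unfold krCnt at h
  obtain ⟨σ, hσ⟩ := Finset.card_ne_zero.1 h
  simp only [Finset.mem_filter, Finset.mem_univ, true_and] at hσ
  let z : Fin r := ⟨0, by omega⟩
  let o : Fin r := ⟨1, by omega⟩
  refine ⟨σ.symm z, σ.symm o, ?_, ?_, ?_, ?_⟩
  · intro h
    have := σ.symm.injective h
    simp [z, o] at this
  · rw [← hσ]; simp [krt, z]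
  · rw [← hσ]; simp [krt, o]
  · intro l h1 h2
    rw [← hσ]
    have h1' : (σ l).val ≠ 0 := by
      intro h; apply h1; rw [Equiv.eq_symm_apply]; exact Fin.ext h
    have h2' : (σ l).val ≠ 1 := by
      intro h; apply h2; rw [Equiv.eq_symm_apply]; exact Fin.ext h
    simp [krt, h1', h2']

lemma kr_ln_cnt {r N : ℕ} (hr : 3 ≤ r) (τ : KrT N) (s : Fin r → KrS N) (h : KrLn τ s) :
    1 ≤ krCnt (krt τ) s := by
  obtain ⟨i, j, hij, hi, hj, hl⟩ := h
  unfold krCnt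
  let z : Fin r := ⟨0, by omega⟩
  let o : Fin r := ⟨1, by omega⟩
  have hzo : z ≠ o := by simp [z, o]
  rw [Nat.one_le_iff_ne_zero, Finset.card_ne_zero]
  let σ : Equiv.Perm (Fin r) := Equiv.swap (Equiv.swap i z j) o * Equiv.swap i z
  have h1 : σ i = z := by
    simp only [σ, Equiv.Perm.mul_apply, Equiv.swap_apply_left]
    refine Equiv.swap_apply_of_ne_of_ne ?_ hzo
    intro h
    apply hij
    apply (Equiv.swap i z).injective
    rw [← h, Equiv.swap_apply_left]
  have h2 : σ j = o := by
    simp [σ]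
  refine ⟨σ, ?_⟩
  simp only [Finset.mem_filter, Finset.mem_univ, true_and]
  intro l
  by_cases hli : l = i
  · subst hli; rw [h1, hi]; simp [krt, z]
  by_cases hlj : l = j
  · subst hlj; rw [h2, hj]; simp [krt, o]
  rw [hl l hli hlj]
  have h1' : (σ l).val ≠ 0 := by
    intro h; apply hli; apply σ.injective; rw [h1]; exact Fin.ext h
  have h2' : (σ l).val ≠ 1 := by
    intro h; apply hlj; apply σ.injective; rw [h2]; exact Fin.ext h
  simp [krt, h1', h2']

lemma kr_third {r : ℕ} (hr : 3 ≤ r) (i j : Fin r) : ∃ l, l ≠ i ∧ l ≠ j := by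
  by_contra hcon
  push Not at hcon
  have : (Finset.univ : Finset (Fin r)) ⊆ {i, j} := by
    intro l _
    by_cases h : l = i
    · simp [h]
    · simp [hcon l h]
  have := Finset.card_le_card this
  have h2 : ({i, j} : Finset (Fin r)).card ≤ 2 := Finset.card_le_two
  simp at this
  omega

lemma kr_type_eq {N : ℕ} (τ τ' : KrT N)
    (g1 : krU τ = krU τ' ∨ krU τ = krV τ' ∨ krU τ = krW τ')
    (g3 : krW τ = krU τ' ∨ krW τ = krV τ' ∨ krW τ = krW τ') : τ = τ' := by
  rcases τ with ⟨o, b, k⟩ | o <;> rcases τ' with ⟨o', b', k'⟩ | o' <;>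
    cases o <;> cases o' <;> simp [krU, krV, krW, krX] at g1 g3 ⊢ <;> grind

lemma kr_ln_unique {r N : ℕ} (hr : 3 ≤ r) (τ τ' : KrT N) (s : Fin r → KrS N) (h : KrLn τ s)
    (h' : KrLn τ' s) : τ = τ' := by
  have key : ∀ (τ : KrT N), KrLn τ s → (∃ l, s l = krU τ) ∧ (∃ l, s l = krV τ) ∧
      (∃ l, s l = krW τ) ∧ ∀ l, s l = krU τ ∨ s l = krV τ ∨ s l = krW τ := by
    rintro τ ⟨i, j, hij, hi, hj, hl⟩
    obtain ⟨l, h1, h2⟩ := kr_third hr i j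
    refine ⟨⟨i, hi⟩, ⟨j, hj⟩, ⟨l, hl l h1 h2⟩, fun m => ?_⟩
    by_cases hmi : m = i
    · left; rw [hmi, hi]
    by_cases hmj : m = j
    · right; left; rw [hmj, hj]
    · right; right; exact hl m hmi hmj
  obtain ⟨⟨l1, h1⟩, ⟨l2, h2⟩, ⟨l3, h3⟩, h4⟩ := key τ h
  have g1 := (key τ' h').2.2.2 l1
  have g3 := (key τ' h').2.2.2 l3
  rw [h1] at g1
  rw [h3] at g3
  exact kr_type_eq τ τ' g1 g3

/-- Weights of line types. -/
def krWt {N : ℕ} (α : ℝ) : KrT N → ℝ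
  | Sum.inl _ => α
  | Sum.inr false => 1
  | Sum.inr true => -1

/-- The symmetric tensor. -/
noncomputable def krM {r N : ℕ} (α : ℝ) (s : Fin r → KrS N) : ℝ :=
  ∑ τ : KrT N, krWt α τ * krCnt (krt τ) s

lemma krM_ne {r N : ℕ} (hr : 3 ≤ r) (α : ℝ) (s : Fin r → KrS N) (h : krM α s ≠ 0) :
    ∃ τ, KrLn τ s := by
  obtain ⟨τ, _, hτ⟩ := Finset.exists_ne_zero_of_sum_ne_zero h
  refine ⟨τ, kr_cnt_ln hr τ s ?_⟩
  intro h0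
  apply hτ
  simp [h0]

lemma krM_ln {r N : ℕ} (hr : 3 ≤ r) (α : ℝ) (s : Fin r → KrS N) (τ : KrT N) (h : KrLn τ s) :
    ∃ c : ℝ, 1 ≤ c ∧ c ≤ (r.factorial : ℝ) ∧ krM α s = krWt α τ * c := by
  refine ⟨krCnt (krt τ) s, by exact_mod_cast kr_ln_cnt hr τ s h, ?_, ?_⟩
  · have : krCnt (krt τ) s ≤ r.factorial := by
      unfold krCnt
      refine (Finset.card_le_univ _).trans ?_
      rw [Fintype.card_perm, Fintype.card_fin]
    exact_mod_cast this
  · unfold krM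
    rw [Finset.sum_eq_single τ]
    · intro τ' _ hne
      by_cases h0 : krCnt (krt τ') s = 0
      · simp [h0]
      · exact absurd (kr_ln_unique hr _ _ s (kr_cnt_ln hr τ' s h0) h) hne
    · simp

/-- A symbol is a block symbol. -/
def KrIsX {N : ℕ} (x : KrS N) : Prop := ∃ y, x = Sum.inl y

lemma kr_isX_X {N : ℕ} (o b c : Bool) (k : Fin N) : KrIsX (krX o b c k) := by
  cases o <;> exact ⟨_, rfl⟩

lemma kr_not_isX {N : ℕ} (y : Option (Bool × Bool)) : ¬ KrIsX (Sum.inr y : KrS N) := by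
  rintro ⟨z, hz⟩; cases hz

lemma kr_ln_inl {r N : ℕ} {o b : Bool} {k : Fin N} {s : Fin r → KrS N}
    (h : KrLn (Sum.inl (o, b, k)) s) :
    ∃ i j, i ≠ j ∧ s i = krX o b false k ∧ s j = krX o b true k ∧
      ∀ l, l ≠ i → l ≠ j → s l = Sum.inr (some (o, b)) := h

lemma kr_ln_inr {r N : ℕ} {o : Bool} {s : Fin r → KrS N} (h : KrLn (Sum.inr o) s) :
    ∃ i j, i ≠ j ∧ s i = Sum.inr (some (o, false)) ∧ s j = Sum.inr (some (o, true)) ∧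
      ∀ l, l ≠ i → l ≠ j → s l = Sum.inr none := h

lemma kr_inr_noX {r N : ℕ} {o : Bool} {s : Fin r → KrS N} (h : KrLn (Sum.inr o) s) (l : Fin r) :
    ¬ KrIsX (s l) := by
  obtain ⟨i, j, hij, hi, hj, hl⟩ := kr_ln_inr h
  by_cases h1 : l = i
  · rw [h1, hi]; exact kr_not_isX _
  by_cases h2 : l = j
  · rw [h2, hj]; exact kr_not_isX _
  rw [hl l h1 h2]; exact kr_not_isX _

lemma kr_isX_inl {r N : ℕ} {τ : KrT N} {s : Fin r → KrS N} (h : KrLn τ s) {l : Fin r}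
    (hl : KrIsX (s l)) : ∃ o b k, τ = Sum.inl (o, b, k) := by
  rcases τ with ⟨o, b, k⟩ | o
  · exact ⟨o, b, k, rfl⟩
  · exact absurd hl (kr_inr_noX h l)

lemma kr_noX_inr {r N : ℕ} {τ : KrT N} {s : Fin r → KrS N} (h : KrLn τ s)
    (hl : ∀ l, ¬ KrIsX (s l)) : ∃ o, τ = Sum.inr o := by
  rcases τ with ⟨o, b, k⟩ | o
  · obtain ⟨i, j, hij, hi, hj, _⟩ := kr_ln_inl h
    exact absurd (hi ▸ kr_isX_X o b false k) (hl i)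
  · exact ⟨o, rfl⟩

/-- entries of an inl-line -/
lemma kr_inl_entry {r N : ℕ} {o b : Bool} {k : Fin N} {s : Fin r → KrS N}
    (h : KrLn (Sum.inl (o, b, k)) s) (l : Fin r) :
    (∃ c, s l = krX o b c k) ∨ s l = Sum.inr (some (o, b)) := by
  obtain ⟨i, j, hij, hi, hj, hl⟩ := kr_ln_inl h
  by_cases h1 : l = i
  · rw [h1, hi]; exact Or.inl ⟨_, rfl⟩
  by_cases h2 : l = j
  · rw [h2, hj]; exact Or.inl ⟨_, rfl⟩
  exact Or.inr (hl l h1 h2)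

lemma kr_inr_entry {r N : ℕ} {o : Bool} {s : Fin r → KrS N}
    (h : KrLn (Sum.inr o) s) (l : Fin r) :
    (∃ c, s l = Sum.inr (some (o, c))) ∨ s l = Sum.inr none := by
  obtain ⟨i, j, hij, hi, hj, hl⟩ := kr_ln_inr h
  by_cases h1 : l = i
  · rw [h1, hi]; exact Or.inl ⟨_, rfl⟩
  by_cases h2 : l = j
  · rw [h2, hj]; exact Or.inl ⟨_, rfl⟩
  exact Or.inr (hl l h1 h2)

/-- an inl-line has two block symbols and they are its only ones. -/
lemma kr_inl_two {r N : ℕ} {o b : Bool} {k : Fin N} {s : Fin r → KrS N}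
    (h : KrLn (Sum.inl (o, b, k)) s) :
    ∃ i j, i ≠ j ∧ KrIsX (s i) ∧ KrIsX (s j) ∧ ∀ l, KrIsX (s l) → l = i ∨ l = j := by
  obtain ⟨i, j, hij, hi, hj, hl⟩ := kr_ln_inl h
  refine ⟨i, j, hij, hi ▸ kr_isX_X _ _ _ _, hj ▸ kr_isX_X _ _ _ _, fun l hX => ?_⟩
  by_contra hcon
  push Not at hcon
  rw [hl l hcon.1 hcon.2] at hX
  exact kr_not_isX _ hX

/-- If all block symbols of an inl-line lie in two places, both are block symbols. -/
lemma kr_inl_two_of {r N : ℕ} {o b : Bool} {k : Fin N} {s : Fin r → KrS N}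
    (h : KrLn (Sum.inl (o, b, k)) s) {p q : Fin r} (hpq : ∀ l, KrIsX (s l) → l = p ∨ l = q) :
    KrIsX (s p) ∧ KrIsX (s q) := by
  obtain ⟨i, j, hij, hi, hj, -⟩ := kr_inl_two h
  rcases hpq i hi with rfl | rfl <;> rcases hpq j hj with rfl | rfl
  · exact absurd rfl hij
  · exact ⟨hi, hj⟩
  · exact ⟨hj, hi⟩
  · exact absurd rfl hij

lemma krX_inj {N : ℕ} {o b b' c c' : Bool} {k k' : Fin N} (h : krX o b c k = krX o b' c' k') :
    b = b' := by
  cases o <;> simp [krX] at h <;> tauto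

/-- The good configuration. -/
def KrGood {r N : ℕ} (ρ κ : Fin r → KrT N) : Prop :=
  ∃ (i1 i2 j1 j2 : Fin r) (o : Bool), i1 ≠ i2 ∧ j1 ≠ j2 ∧
    (∃ x, ρ i1 = Sum.inl x) ∧ (∃ x, ρ i2 = Sum.inl x) ∧
    (∃ x, κ j1 = Sum.inl x) ∧ (∃ x, κ j2 = Sum.inl x) ∧
    (∀ i, i ≠ i1 → i ≠ i2 → ρ i = Sum.inr o) ∧
    (∀ j, j ≠ j1 → j ≠ j2 → κ j = Sum.inr (!o))

lemma KrGood.symm {r N : ℕ} {ρ κ : Fin r → KrT N} (h : KrGood ρ κ) : KrGood κ ρ := by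
  obtain ⟨i1, i2, j1, j2, o, h1, h2, h3, h4, h5, h6, h7, h8⟩ := h
  exact ⟨j1, j2, i1, i2, !o, h2, h1, h5, h6, h3, h4, h8, by simpa using h7⟩

lemma kr_good_of {r N : ℕ} (a : Fin r → Fin r → KrS N) (ρ κ : Fin r → KrT N)
    (hρ : ∀ i, KrLn (ρ i) (a i)) (hκ : ∀ j, KrLn (κ j) (fun i => a i j))
    (i0 i1 j1 : Fin r) (hX : KrIsX (a i1 j1)) (h0 : ∀ j, ¬ KrIsX (a i0 j)) : KrGood ρ κ := by
  obtain ⟨o, ho⟩ := kr_noX_inr (hρ i0) h0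
  have hi0 := hρ i0
  rw [ho] at hi0
  obtain ⟨J1, J2, hJ, hJ1, hJ2, hJl⟩ := kr_ln_inr hi0
  -- columns with block symbols
  have hcol : ∀ j, (∃ i, KrIsX (a i j)) → ∃ b k, κ j = Sum.inl (o, b, k) ∧
      ((j = J1 ∧ b = false) ∨ (j = J2 ∧ b = true)) := by
    rintro j ⟨i, hij⟩
    obtain ⟨o', b, k, hk⟩ := kr_isX_inl (hκ j) hij
    have hj := hκ j
    rw [hk] at hj
    rcases kr_inl_entry hj i0 with ⟨c, hc⟩ | hc
    · exact absurd (show KrIsX (a i0 j) from hc ▸ kr_isX_X _ _ _ _) (h0 j)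
    · by_cases e1 : j = J1
      · rw [e1, hJ1] at hc
        simp at hc
        exact ⟨b, k, by rw [hk, hc.1], Or.inl ⟨e1, hc.2⟩⟩
      by_cases e2 : j = J2
      · rw [e2, hJ2] at hc
        simp at hc
        exact ⟨b, k, by rw [hk, hc.1], Or.inr ⟨e2, hc.2⟩⟩
      · rw [hJl j e1 e2] at hc
        simp at hc
  have hcol' : ∀ i j, KrIsX (a i j) → j = J1 ∨ j = J2 := by
    intro i j h
    obtain ⟨b, k, _, h | h⟩ := hcol j ⟨i, h⟩
    · exact Or.inl h.1
    · exact Or.inr h.1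
  -- block rows
  have hrow : ∀ i, (∃ j, KrIsX (a i j)) → KrIsX (a i J1) ∧ KrIsX (a i J2) := by
    rintro i ⟨j, h⟩
    obtain ⟨o', b, k, hk⟩ := kr_isX_inl (hρ i) h
    have hi := hρ i
    rw [hk] at hi
    exact kr_inl_two_of hi (hcol' i)
  obtain ⟨hX1, hX2⟩ := hrow i1 ⟨j1, hX⟩
  obtain ⟨b1, k1, hk1, hb1⟩ := hcol J1 ⟨i1, hX1⟩
  obtain ⟨b2, k2, hk2, hb2⟩ := hcol J2 ⟨i1, hX2⟩
  have hb1 : b1 = false := by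
    rcases hb1 with h | h
    · exact h.2
    · exact absurd h.1 hJ
  have hb2 : b2 = true := by
    rcases hb2 with h | h
    · exact absurd h.1.symm hJ
    · exact h.2
  subst hb1 hb2
  have hc1 := hκ J1
  rw [hk1] at hc1
  have hc2 := hκ J2
  rw [hk2] at hc2
  obtain ⟨I1, I2, hI, hI1, hI2, hIl⟩ := kr_inl_two hc1
  -- rows outside
  have hout : ∀ i, i ≠ I1 → i ≠ I2 → ρ i = Sum.inr o := by
    intro i h1 h2
    have hno : ∀ j, ¬ KrIsX (a i j) := by
      intro j h
      rcases hIl i (hrow i ⟨j, h⟩).1 with h | h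
      · exact h1 h
      · exact h2 h
    obtain ⟨o', ho'⟩ := kr_noX_inr (hρ i) hno
    have hi := hρ i
    rw [ho'] at hi
    rcases kr_inl_entry hc1 i with ⟨c, hc⟩ | hc
    · exact absurd (show KrIsX (a i J1) from hc ▸ kr_isX_X _ _ _ _) (hno J1)
    · skip
      rcases kr_inr_entry hi J1 with ⟨c, hc'⟩ | hc'
      · rw [hc] at hc'
        simp at hc'
        rw [ho', hc'.1]
      · rw [hc] at hc'
        simp at hc'
  have hin : ∀ i, KrIsX (a i J1) → ∃ b k, ρ i = Sum.inl (!o, b, k) := by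
    intro i h
    obtain ⟨o', b, k, hk⟩ := kr_isX_inl (hρ i) h
    refine ⟨b, k, ?_⟩
    rw [hk]
    by_cases hoo : o' = !o
    · rw [hoo]
    exfalso
    have hoo : o' = o := by revert hoo; cases o <;> cases o' <;> simp
    subst hoo
    have hi := hρ i
    rw [hk] at hi
    have e1 : ∃ c, a i J1 = krX o' false c k1 := by
      rcases kr_inl_entry hc1 i with hc | hc
      · exact hc
      · skip
        rw [hc] at h
        exact absurd h (kr_not_isX _)
    have e2 : ∃ c, a i J2 = krX o' true c k2 := by
      have h' := (hrow i ⟨J1, h⟩).2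
      rcases kr_inl_entry hc2 i with hc | hc
      · exact hc
      · skip
        rw [hc] at h'
        exact absurd h' (kr_not_isX _)
    have f1 : ∃ c, a i J1 = krX o' b c k := by
      rcases kr_inl_entry hi J1 with hc | hc
      · exact hc
      · rw [hc] at h
        exact absurd h (kr_not_isX _)
    have f2 : ∃ c, a i J2 = krX o' b c k := by
      have h' := (hrow i ⟨J1, h⟩).2
      rcases kr_inl_entry hi J2 with hc | hc
      · exact hc
      · rw [hc] at h'
        exact absurd h' (kr_not_isX _)
    obtain ⟨c1, e1⟩ := e1
    obtain ⟨c2, e2⟩ := e2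
    obtain ⟨d1, f1⟩ := f1
    obtain ⟨d2, f2⟩ := f2
    have g1 := krX_inj (e1.symm.trans f1)
    have g2 := krX_inj (e2.symm.trans f2)
    rw [← g1] at g2
    cases g2
  obtain ⟨b1, m1, hm1⟩ := hin I1 hI1
  obtain ⟨b2, m2, hm2⟩ := hin I2 hI2
  refine ⟨I1, I2, J1, J2, o, hI, hJ, ⟨_, hm1⟩, ⟨_, hm2⟩, ⟨_, hk1⟩, ⟨_, hk2⟩, hout, ?_⟩
  intro j hj1 hj2
  have hno : ∀ i, ¬ KrIsX (a i j) := by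
    intro i h
    rcases hcol' i j h with h | h
    · exact hj1 h
    · exact hj2 h
  obtain ⟨o', ho'⟩ := kr_noX_inr (hκ j) hno
  have hj := hκ j
  rw [ho'] at hj
  have hi := hρ I1
  rw [hm1] at hi
  rcases kr_inl_entry hi j with ⟨c, hc⟩ | hc
  · exact absurd (show KrIsX (a I1 j) from hc ▸ kr_isX_X _ _ _ _) (hno I1)
  · rcases kr_inr_entry hj I1 with ⟨c, hc'⟩ | hc'
    · skip
      rw [hc] at hc'
      simp at hc'
      rw [ho', hc'.1, Bool.not_not]
    · skip
      rw [hc] at hc'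
      simp at hc'

/-- no block symbols -/
def KrNoX {r N : ℕ} (a : Fin r → Fin r → KrS N) : Prop := ∀ i j, ¬ KrIsX (a i j)

/-- block symbols everywhere -/
def KrAllX {r N : ℕ} (ρ κ : Fin r → KrT N) : Prop :=
  (∀ i, ∃ x, ρ i = Sum.inl x) ∧ (∀ j, ∃ x, κ j = Sum.inl x)

lemma kr_trichotomy {r N : ℕ} (a : Fin r → Fin r → KrS N) (ρ κ : Fin r → KrT N)
    (hρ : ∀ i, KrLn (ρ i) (a i)) (hκ : ∀ j, KrLn (κ j) (fun i => a i j)) :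
    KrNoX a ∨ KrAllX ρ κ ∨ KrGood ρ κ := by
  by_cases h1 : KrNoX a
  · exact Or.inl h1
  right
  unfold KrNoX at h1
  push Not at h1
  obtain ⟨i1, j1, hX⟩ := h1
  by_cases h2 : KrAllX ρ κ
  · exact Or.inl h2
  right
  unfold KrAllX at h2
  rw [not_and_or] at h2
  push Not at h2
  rcases h2 with ⟨i0, h⟩ | ⟨j0, h⟩
  · refine kr_good_of a ρ κ hρ hκ i0 i1 j1 hX ?_
    intro j hj
    obtain ⟨o, b, k, hk⟩ := kr_isX_inl (hρ i0) hj
    exact h _ hk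
  · refine (kr_good_of (fun j i => a i j) κ ρ hκ hρ j0 j1 i1 hX ?_).symm
    intro i hi
    obtain ⟨o, b, k, hk⟩ := kr_isX_inl (hκ j0) hi
    exact h _ hk

/-- build an array out of a colour pattern and an index map -/
def krBuild {r N : ℕ} (s : ℕ) (d : (Fin r → Fin r → (Bool × Bool) ⊕ Option (Bool × Bool)) ×
    (Fin s → Fin N) × (Fin r → Fin s)) : Fin r → Fin r → KrS N := fun i j =>
  match d.1 i j with
  | Sum.inl (b, c) => Sum.inl (b, c, d.2.1 (d.2.2 i))
  | Sum.inr y => Sum.inr y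

lemma kr_factor {r N s : ℕ} (hs : r = 2 * s + 1) (k : Fin r → Fin N)
    (hk : ∀ i, ∃ i', i' ≠ i ∧ k i' = k i) :
    ∃ (g : Fin s → Fin N) (h : Fin r → Fin s), ∀ i, k i = g (h i) := by
  have hcard : 2 * (Finset.univ.image k).card ≤ r := by
    have := Finset.card_nsmul_le_sum (Finset.univ.image k)
      (fun b => (Finset.univ.filter (fun i => k i = b)).card) 2 (by
        intro b hb
        simp only [Finset.mem_image, Finset.mem_univ, true_and] at hb
        obtain ⟨i, rfl⟩ := hb
        obtain ⟨i', hne, he⟩ := hk i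
        rw [Nat.succ_le_iff, Finset.one_lt_card]
        exact ⟨i', by simp [he], i, by simp, hne⟩)
    rw [← Finset.card_eq_sum_card_image] at this
    simp at this
    omega
  have hle : (Finset.univ.image k).card ≤ s := by omega
  let im := Finset.univ.image k
  let e : im ≃ Fin im.card := im.equivFin
  have hr : 0 < r := by omega
  refine ⟨fun x => if hx : x.val < im.card then (e.symm ⟨x.val, hx⟩).1 else k ⟨0, hr⟩,
    fun i => ⟨(e ⟨k i, by simp [im]⟩).val, lt_of_lt_of_le (Fin.is_lt _) hle⟩, ?_⟩
  intro i
  simp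

lemma kr_allX_build {r N s : ℕ} (hs : r = 2 * s + 1) (a : Fin r → Fin r → KrS N)
    (ρ κ : Fin r → KrT N)
    (hρ : ∀ i, KrLn (ρ i) (a i)) (hκ : ∀ j, KrLn (κ j) (fun i => a i j)) (hall : KrAllX ρ κ) :
    ∃ d, krBuild s d = a := by
  have h1 : ∀ i, ∃ k : Fin N, ∃ o b, ρ i = Sum.inl (o, b, k) := by
    intro i
    obtain ⟨⟨o, b, k⟩, h⟩ := hall.1 i
    exact ⟨k, o, b, h⟩
  have h2 : ∀ j, ∃ k : Fin N, ∃ o b, κ j = Sum.inl (o, b, k) := by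
    intro i
    obtain ⟨⟨o, b, k⟩, h⟩ := hall.2 i
    exact ⟨k, o, b, h⟩
  choose k hk using h1
  choose k' hk' using h2
  have idx : ∀ (o b : Bool) (m : Fin N) (s : Fin r → KrS N) (_ : KrLn (Sum.inl (o, b, m)) s)
      (l : Fin r) (b' c' : Bool) (m' : Fin N), s l = Sum.inl (b', c', m') → m' = m := by
    intro o b m s h l b' c' m' hl
    rcases kr_inl_entry h l with ⟨c, hc⟩ | hc
    · rw [hl] at hc
      cases o <;> simp [krX] at hc <;> tauto
    · rw [hl] at hc; cases hc
  have hrow : ∀ i j b c m, a i j = Sum.inl (b, c, m) → m = k i := by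
    intro i j b c m h
    obtain ⟨o', b', hh⟩ := hk i
    have hi := hρ i
    rw [hh] at hi
    exact idx _ _ _ _ hi j _ _ _ h
  have hcol : ∀ i j b c m, a i j = Sum.inl (b, c, m) → m = k' j := by
    intro i j b c m h
    obtain ⟨o', b', hh⟩ := hk' j
    have hi := hκ j
    rw [hh] at hi
    exact idx _ _ _ _ hi i _ _ _ h
  have heq : ∀ i j, KrIsX (a i j) → k i = k' j := by
    rintro i j ⟨⟨b, c, m⟩, h⟩
    rw [← hrow i j b c m h, hcol i j b c m h]
  have hfib : ∀ i, ∃ i', i' ≠ i ∧ k i' = k i := by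
    intro i
    obtain ⟨o', b', hh⟩ := hk i
    have hi := hρ i
    rw [hh] at hi
    obtain ⟨j, _, _, hj, _, _⟩ := kr_inl_two hi
    obtain ⟨o'', b'', hh'⟩ := hk' j
    have hc := hκ j
    rw [hh'] at hc
    obtain ⟨p, q, hpq, hp, hq, _⟩ := kr_inl_two hc
    by_cases hpi : p = i
    · refine ⟨q, ?_, ?_⟩
      · rintro rfl; exact hpq hpi
      · rw [heq i j hj, heq q j hq]
    · exact ⟨p, hpi, by rw [heq i j hj, heq p j hp]⟩
  obtain ⟨g, h, hgh⟩ := kr_factor hs k hfib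
  refine ⟨(fun i j => match a i j with
    | Sum.inl (b, c, _) => Sum.inl (b, c)
    | Sum.inr y => Sum.inr y, g, h), ?_⟩
  funext i j
  rcases hx : a i j with ⟨b, c, m⟩ | y
  · simp [krBuild, hx, ← hgh, hrow i j b c m hx]
  · simp [krBuild, hx]

lemma kr_prod_pos {r : ℕ} (α : ℝ) (hα : 0 < α) (g : Fin r → ℝ) (i1 i2 : Fin r) (h12 : i1 ≠ i2)
    (h1 : α ≤ g i1) (h2 : α ≤ g i2) (h : ∀ i, i ≠ i1 → i ≠ i2 → 1 ≤ g i) :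
    α ^ 2 ≤ ∏ i, g i := by
  rw [← Finset.mul_prod_erase _ _ (Finset.mem_univ i1),
    ← Finset.mul_prod_erase _ _ (Finset.mem_erase.2 ⟨h12.symm, Finset.mem_univ i2⟩)]
  have h3 : 1 ≤ ∏ i ∈ (Finset.univ.erase i1).erase i2, g i := by
    have := Finset.prod_le_prod (s := (Finset.univ.erase i1).erase i2) (f := fun _ => (1:ℝ)) (g := g)
      (fun _ _ => zero_le_one) (fun i hi => by
        simp only [Finset.mem_erase, Finset.mem_univ, and_true] at hi
        exact h i hi.2 hi.1)
    simpa using this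
  have h4 : α * α ≤ g i1 * g i2 := mul_le_mul h1 h2 hα.le (hα.le.trans h1)
  calc α ^ 2 = α * α * 1 := by ring
    _ ≤ g i1 * g i2 * ∏ i ∈ (Finset.univ.erase i1).erase i2, g i := by
        refine mul_le_mul h4 h3 zero_le_one ?_
        exact mul_nonneg (hα.le.trans h1) (hα.le.trans h2)
    _ = _ := by ring

lemma kr_prod_neg {r : ℕ} (hodd : Odd r) (α : ℝ) (hα : 0 < α) (g : Fin r → ℝ) (i1 i2 : Fin r)
    (h12 : i1 ≠ i2) (h1 : α ≤ g i1) (h2 : α ≤ g i2) (h : ∀ i, i ≠ i1 → i ≠ i2 → g i ≤ -1) :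
    ∏ i, g i ≤ - α ^ 2 := by
  let e : Fin r → ℝ := fun i => if i = i1 ∨ i = i2 then 1 else -1
  have hp := kr_prod_pos α hα (fun i => e i * g i) i1 i2 h12 (by simpa [e] using h1)
    (by simpa [e] using h2) (by
      intro i hi1 hi2
      have := h i hi1 hi2
      simp [e, hi1, hi2]
      linarith)
  rw [Finset.prod_mul_distrib] at hp
  have he : ∏ i, e i = -1 := by
    have h1 : ∏ i, e i = ∏ i, ((-1 : ℝ) * (if i = i1 then -1 else 1) * (if i = i2 then -1 else 1)) := by
      refine Finset.prod_congr rfl fun i _ => ?_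
      simp only [e]
      by_cases a1 : i = i1 <;> by_cases a2 : i = i2
      · exact absurd (a1.symm.trans a2) h12
      all_goals simp [a1, a2, h12, h12.symm]
    rw [h1, Finset.prod_mul_distrib, Finset.prod_mul_distrib]
    simp [hodd.neg_pow]
  rw [he] at hp
  linarith

/-- The term of an array. -/
noncomputable def krTerm {r N : ℕ} (α : ℝ) (a : Fin r → Fin r → KrS N) : ℝ :=
  (∏ i, krM α (a i)) * (∏ j, krM α (fun i => a i j))

lemma kr_inl_ge {r N : ℕ} (hr : 3 ≤ r) {α : ℝ} (hα : 0 < α) {s : Fin r → KrS N} {τ : KrT N}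
    (h : KrLn τ s) (ht : ∃ x, τ = Sum.inl x) : α ≤ krM α s := by
  obtain ⟨c, h1, _, h3⟩ := krM_ln hr α s τ h
  obtain ⟨x, rfl⟩ := ht
  rw [h3]
  simp only [krWt]
  nlinarith

lemma kr_inrf_ge {r N : ℕ} (hr : 3 ≤ r) (α : ℝ) {s : Fin r → KrS N} {τ : KrT N}
    (h : KrLn τ s) (ht : τ = Sum.inr false) : 1 ≤ krM α s := by
  obtain ⟨c, h1, _, h3⟩ := krM_ln hr α s τ h
  subst ht
  rw [h3]
  simp only [krWt]
  linarith

lemma kr_inrt_le {r N : ℕ} (hr : 3 ≤ r) (α : ℝ) {s : Fin r → KrS N} {τ : KrT N}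
    (h : KrLn τ s) (ht : τ = Sum.inr true) : krM α s ≤ -1 := by
  obtain ⟨c, h1, _, h3⟩ := krM_ln hr α s τ h
  subst ht
  rw [h3]
  simp only [krWt]
  linarith

lemma kr_good_term {r N : ℕ} (hr : 3 ≤ r) (hodd : Odd r) {α : ℝ} (hα : 0 < α)
    (a : Fin r → Fin r → KrS N) (ρ κ : Fin r → KrT N)
    (hρ : ∀ i, KrLn (ρ i) (a i)) (hκ : ∀ j, KrLn (κ j) (fun i => a i j)) (hg : KrGood ρ κ) :
    krTerm α a ≤ - α ^ 4 := by
  obtain ⟨i1, i2, j1, j2, o, h1, h2, h3, h4, h5, h6, h7, h8⟩ := hg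
  unfold krTerm
  cases o
  · have hp := kr_prod_pos α hα (fun i => krM α (a i)) i1 i2 h1 (kr_inl_ge hr hα (hρ i1) h3)
      (kr_inl_ge hr hα (hρ i2) h4) (fun i a1 a2 => kr_inrf_ge hr α (hρ i) (h7 i a1 a2))
    have hq := kr_prod_neg hodd α hα (fun j => krM α (fun i => a i j)) j1 j2 h2
      (kr_inl_ge hr hα (hκ j1) h5) (kr_inl_ge hr hα (hκ j2) h6)
      (fun i a1 a2 => kr_inrt_le hr α (hκ i) (h8 i a1 a2))
    have : 0 < α ^ 2 := by positivity
    nlinarith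
  · have hp := kr_prod_neg hodd α hα (fun i => krM α (a i)) i1 i2 h1 (kr_inl_ge hr hα (hρ i1) h3)
      (kr_inl_ge hr hα (hρ i2) h4) (fun i a1 a2 => kr_inrt_le hr α (hρ i) (h7 i a1 a2))
    have hq := kr_prod_pos α hα (fun j => krM α (fun i => a i j)) j1 j2 h2
      (kr_inl_ge hr hα (hκ j1) h5) (kr_inl_ge hr hα (hκ j2) h6)
      (fun i a1 a2 => kr_inrf_ge hr α (hκ i) (h8 i a1 a2))
    have : 0 < α ^ 2 := by positivity
    nlinarith

lemma kr_term_abs {r N : ℕ} (α B : ℝ)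
    (a : Fin r → Fin r → KrS N)
    (h1 : ∀ i, |krM α (a i)| ≤ B) (h2 : ∀ j, |krM α (fun i => a i j)| ≤ B) :
    krTerm α a ≤ B ^ r * B ^ r := by
  refine (le_abs_self _).trans ?_
  unfold krTerm
  rw [abs_mul, Finset.abs_prod, Finset.abs_prod]
  have e1 : ∏ i, |krM α (a i)| ≤ B ^ r := by
    have := Finset.prod_le_prod (s := Finset.univ) (f := fun i => |krM α (a i)|) (g := fun _ => B)
      (fun i _ => abs_nonneg _) (fun i _ => h1 i)
    simpa using this
  have e2 : ∏ j, |krM α (fun i => a i j)| ≤ B ^ r := by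
    have := Finset.prod_le_prod (s := Finset.univ) (f := fun j => |krM α (fun i => a i j)|)
      (g := fun _ => B) (fun i _ => abs_nonneg _) (fun i _ => h2 i)
    simpa using this
  have e0 : 0 ≤ ∏ j, |krM α (fun i => a i j)| := Finset.prod_nonneg fun _ _ => abs_nonneg _
  exact mul_le_mul e1 e2 e0 ((Finset.prod_nonneg fun _ _ => abs_nonneg _).trans e1)

lemma kr_abs_inl {r N : ℕ} (hr : 3 ≤ r) {α : ℝ} (hα : 0 < α) {s : Fin r → KrS N} {τ : KrT N}
    (h : KrLn τ s) (ht : ∃ x, τ = Sum.inl x) : |krM α s| ≤ α * (r.factorial : ℝ) := by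
  obtain ⟨c, h1, h2, h3⟩ := krM_ln hr α s τ h
  obtain ⟨x, rfl⟩ := ht
  rw [h3]
  simp only [krWt]
  rw [abs_of_nonneg (by positivity)]
  gcongr

lemma kr_abs_inr {r N : ℕ} (hr : 3 ≤ r) (α : ℝ) {s : Fin r → KrS N} {τ : KrT N}
    (h : KrLn τ s) (ht : ∃ x, τ = Sum.inr x) : |krM α s| ≤ (r.factorial : ℝ) := by
  obtain ⟨c, h1, h2, h3⟩ := krM_ln hr α s τ h
  obtain ⟨x, rfl⟩ := ht
  rw [h3, abs_mul, abs_of_nonneg (show 0 ≤ c by linarith)]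
  cases x <;> simp [krWt, h2]

/-- The special array. -/
def krSp {r N : ℕ} (k : Fin N) : Fin r → Fin r → KrS N := fun i j =>
  if i.val < 2 then
    if j.val < 2 then Sum.inl (decide (i.val = 1), decide (j.val = 1), k)
    else Sum.inr (some (false, decide (i.val = 1)))
  else
    if j.val < 2 then Sum.inr (some (true, decide (j.val = 1)))
    else Sum.inr none

lemma krSp_inj {r N : ℕ} (hr : 3 ≤ r) : Function.Injective (krSp (r := r) (N := N)) := by
  intro k k' h
  have := congrFun (congrFun h ⟨0, by omega⟩) ⟨0, by omega⟩
  simpa [krSp] using this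

lemma krSp_row {r N : ℕ} (hr : 3 ≤ r) (k : Fin N) (i : Fin r) :
    KrLn (if i.val < 2 then Sum.inl (false, decide (i.val = 1), k) else Sum.inr true) (krSp k i) := by
  refine ⟨⟨0, by omega⟩, ⟨1, by omega⟩, by simp, ?_, ?_, ?_⟩
  · split_ifs with h <;> simp [krSp, h, krU, krX]
  · split_ifs with h <;> simp [krSp, h, krV, krX]
  · intro l h0 h1
    have h2 : ¬ l.val < 2 := by
      simp [Fin.ext_iff] at h0 h1
      omega
    split_ifs with h <;> simp [krSp, h, h2, krW]

lemma krSp_col {r N : ℕ} (hr : 3 ≤ r) (k : Fin N) (j : Fin r) :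
    KrLn (if j.val < 2 then Sum.inl (true, decide (j.val = 1), k) else Sum.inr false)
      (fun i => krSp k i j) := by
  refine ⟨⟨0, by omega⟩, ⟨1, by omega⟩, by simp, ?_, ?_, ?_⟩
  · split_ifs with h <;> simp [krSp, h, krU, krX]
  · split_ifs with h <;> simp [krSp, h, krV, krX]
  · intro l h0 h1
    have h2 : ¬ l.val < 2 := by
      simp [Fin.ext_iff] at h0 h1
      omega
    split_ifs with h <;> simp [krSp, h, h2, krW]

lemma krSp_term {r N : ℕ} (hr : 3 ≤ r) (hodd : Odd r) {α : ℝ} (hα : 0 < α) (k : Fin N) :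
    krTerm α (krSp (r := r) k) ≤ - α ^ 4 := by
  refine kr_good_term hr hodd hα (krSp k) _ _ (krSp_row hr k) (krSp_col hr k) ?_
  refine ⟨⟨0, by omega⟩, ⟨1, by omega⟩, ⟨0, by omega⟩, ⟨1, by omega⟩, true, by simp, by simp,
    by simp, by simp, by simp, by simp, ?_, ?_⟩
  all_goals
    intro l h0 h1
    have h2 : ¬ l.val < 2 := by
      simp [Fin.ext_iff] at h0 h1
      omega
    simp [h2]

lemma kr_pointwise {r N s : ℕ} (hr : 3 ≤ r) (hodd : Odd r) (hs : r = 2 * s + 1) {α : ℝ} (hα : 0 < α)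
    (a : Fin r → Fin r → KrS N) :
    krTerm α a ≤ (r.factorial : ℝ) ^ r * (r.factorial : ℝ) ^ r * (if KrNoX a then 1 else 0) +
      (α * r.factorial : ℝ) ^ r * (α * r.factorial : ℝ) ^ r *
        (if a ∈ Finset.univ.image (krBuild (r := r) (N := N) s) then 1 else 0) -
      α ^ 4 * (if a ∈ Finset.univ.image (krSp (r := r) (N := N)) then 1 else 0) := by
  have p1 : 0 ≤ (r.factorial : ℝ) ^ r * (r.factorial : ℝ) ^ r * (if KrNoX a then 1 else 0) := by
    split_ifs <;> positivity
  have p2 : 0 ≤ (α * r.factorial : ℝ) ^ r * (α * r.factorial : ℝ) ^ r *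
        (if a ∈ Finset.univ.image (krBuild (r := r) (N := N) s) then 1 else 0) := by
    split_ifs <;> positivity
  by_cases hsp : a ∈ Finset.univ.image (krSp (r := r) (N := N))
  · rw [if_pos hsp]
    simp only [Finset.mem_image, Finset.mem_univ, true_and] at hsp
    obtain ⟨k, rfl⟩ := hsp
    have := krSp_term hr hodd hα (r := r) k
    linarith
  rw [if_neg hsp]
  by_cases hrow : ∀ i, krM α (a i) ≠ 0
  swap
  · push Not at hrow
    obtain ⟨i, hi⟩ := hrow
    have : krTerm α a = 0 := by
      unfold krTerm
      rw [Finset.prod_eq_zero (Finset.mem_univ i) hi, zero_mul]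
    linarith
  by_cases hcol : ∀ j, krM α (fun i => a i j) ≠ 0
  swap
  · push Not at hcol
    obtain ⟨j, hj⟩ := hcol
    have : krTerm α a = 0 := by
      unfold krTerm
      have h0 : ∏ j, krM α (fun i => a i j) = 0 :=
        Finset.prod_eq_zero (f := fun j => krM α (fun i => a i j)) (Finset.mem_univ j) hj
      rw [h0, mul_zero]
    linarith
  choose ρ hρ using fun i => krM_ne hr α _ (hrow i)
  choose κ hκ using fun j => krM_ne hr α _ (hcol j)
  rcases kr_trichotomy a ρ κ hρ hκ with h | h | h
  · have := kr_term_abs α (r.factorial : ℝ) a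
      (fun i => kr_abs_inr hr α (hρ i) (kr_noX_inr (hρ i) (h i)))
      (fun j => kr_abs_inr hr α (hκ j) (kr_noX_inr (hκ j) (fun i => h i j)))
    rw [if_pos h]
    linarith
  · have := kr_term_abs α (α * r.factorial : ℝ) a
      (fun i => kr_abs_inl hr hα (hρ i) (h.1 i)) (fun j => kr_abs_inl hr hα (hκ j) (h.2 j))
    obtain ⟨d, hd⟩ := kr_allX_build hs a ρ κ hρ hκ h
    have hm : a ∈ Finset.univ.image (krBuild (r := r) (N := N) s) :=
      Finset.mem_image.2 ⟨d, Finset.mem_univ _, hd⟩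
    rw [if_pos hm] at p2 ⊢
    linarith
  · have := kr_good_term hr hodd hα a ρ κ hρ hκ h
    have : 0 < α ^ 4 := by positivity
    linarith

lemma kr_noX_card (r N : ℕ) :
    (Finset.univ.filter (fun a : Fin r → Fin r → KrS N => KrNoX a)).card ≤
      Fintype.card (Fin r → Fin r → Option (Bool × Bool)) := by
  rw [← Finset.card_univ]
  refine Finset.card_le_card_of_surjOn
    (fun (d : Fin r → Fin r → Option (Bool × Bool)) i j => Sum.inr (d i j)) ?_
  intro a ha
  simp only [Finset.coe_filter, Finset.mem_univ, true_and, Set.mem_setOf_eq] at ha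
  have : ∀ i j, ∃ y, a i j = Sum.inr y := by
    intro i j
    rcases h : a i j with x | y
    · exact absurd ⟨x, h⟩ (ha i j)
    · exact ⟨y, rfl⟩
  choose d hd using this
  exact ⟨d, by simp, by funext i j; exact (hd i j).symm⟩

lemma kr_sum_bound {r N s : ℕ} (hr : 3 ≤ r) (hodd : Odd r) (hs : r = 2 * s + 1) {α : ℝ} (hα : 0 < α) :
    ∑ a : Fin r → Fin r → KrS N, krTerm α a ≤
      (r.factorial : ℝ) ^ r * (r.factorial : ℝ) ^ r *
        (Fintype.card (Fin r → Fin r → Option (Bool × Bool)) : ℝ) +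
      (α * r.factorial : ℝ) ^ r * (α * r.factorial : ℝ) ^ r *
        ((Fintype.card (Fin r → Fin r → (Bool × Bool) ⊕ Option (Bool × Bool)) : ℝ) *
          ((N : ℝ) ^ s * (s : ℝ) ^ r)) - α ^ 4 * N := by
  refine (Finset.sum_le_sum fun a _ => kr_pointwise (s := s) hr hodd hs hα a).trans ?_
  rw [Finset.sum_sub_distrib, Finset.sum_add_distrib, ← Finset.mul_sum, ← Finset.mul_sum,
    ← Finset.mul_sum]
  simp only [Finset.sum_boole]
  have c1 : ((Finset.univ.filter (fun a : Fin r → Fin r → KrS N => KrNoX a)).card : ℝ) ≤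
      (Fintype.card (Fin r → Fin r → Option (Bool × Bool)) : ℝ) := by
    exact_mod_cast kr_noX_card r N
  have c2 : ((Finset.univ.filter (fun a : Fin r → Fin r → KrS N =>
      a ∈ Finset.univ.image (krBuild (r := r) (N := N) s))).card : ℝ) ≤
      (Fintype.card (Fin r → Fin r → (Bool × Bool) ⊕ Option (Bool × Bool)) : ℝ) *
          ((N : ℝ) ^ s * (s : ℝ) ^ r) := by
    rw [Finset.filter_univ_mem]
    have := Finset.card_image_le (s := Finset.univ) (f := krBuild (r := r) (N := N) s)
    rw [Finset.card_univ, Fintype.card_prod, Fintype.card_prod,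
      Fintype.card_fun (α := Fin s) (β := Fin N), Fintype.card_fun (α := Fin r) (β := Fin s)] at this
    simp only [Fintype.card_fin] at this
    exact_mod_cast this
  have c3 : ((Finset.univ.filter (fun a : Fin r → Fin r → KrS N =>
      a ∈ Finset.univ.image (krSp (r := r) (N := N)))).card : ℝ) = N := by
    rw [Finset.filter_univ_mem, Finset.card_image_of_injective _ (krSp_inj hr)]
    simp
  rw [c3]
  gcongr

/-- The `1`-subdivision of `K_{r,r}` is not a positive graph for odd `r ≥ 3`. -/
theorem subdivisionKrr_not_positive (r : ℕ) (hr : 3 ≤ r) (hodd : Odd r) :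
    ¬ GraphPositive (subdivisionKrr r) := by
  intro hpos
  obtain ⟨s, hs⟩ := hodd
  set K : ℝ := (r.factorial : ℝ) ^ r * (r.factorial : ℝ) ^ r with hK
  set D0 : ℝ := (Fintype.card (Fin r → Fin r → Option (Bool × Bool)) : ℝ) with hD0
  set D1 : ℝ := (Fintype.card (Fin r → Fin r → (Bool × Bool) ⊕ Option (Bool × Bool)) : ℝ) *
    (s : ℝ) ^ r with hD1
  have hK0 : 0 ≤ K := by positivity
  have hD00 : 0 ≤ D0 := by positivity
  have hD10 : 0 ≤ D1 := by positivity
  set B : ℝ := K * D0 + 2 with hB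
  have hB1 : 1 ≤ B := by nlinarith [mul_nonneg hK0 hD00]
  have hBpos : 0 < B := by linarith
  obtain ⟨n, hn⟩ := exists_nat_ge (K * D1 * B ^ (2 * r) + 1)
  have hQ : 0 ≤ K * D1 * B ^ (2 * r) := by positivity
  have hn1 : (1 : ℝ) ≤ n := by linarith
  have hn0 : (0 : ℝ) < n := by linarith
  have hα : 0 < B / n := by positivity
  have h1 := kr_sum_bound (N := n ^ 4) hr ⟨s, hs⟩ hs hα
  have : Nonempty (KrT (n ^ 4)) := ⟨Sum.inr true⟩
  have h0 := kr_tensor r ⟨s, hs⟩ hpos (KrT (n ^ 4)) (KrS (n ^ 4)) krt (krWt (B / n))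
    (krM (B / n)) (fun _ => rfl)
  have h2 := h0.trans h1
  rw [← hK, ← hD0] at h2
  have e1 : (B / n * r.factorial : ℝ) ^ r * (B / n * r.factorial : ℝ) ^ r *
        ((Fintype.card (Fin r → Fin r → (Bool × Bool) ⊕ Option (Bool × Bool)) : ℝ) *
          (((n ^ 4 : ℕ) : ℝ) ^ s * (s : ℝ) ^ r)) = K * D1 * B ^ (2 * r) / n ^ 2 := by
    rw [hK, hD1, mul_pow, div_pow, show (n : ℝ) ^ r = (n : ℝ) ^ (2 * s) * n by rw [hs, pow_succ]]
    rw [show (((n ^ 4 : ℕ) : ℝ)) ^ s = (n : ℝ) ^ (2 * s) * (n : ℝ) ^ (2 * s) by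
      push_cast; rw [← pow_mul, ← pow_add]; ring_nf]
    rw [show B ^ (2 * r) = B ^ r * B ^ r by rw [← pow_add]; ring_nf]
    field_simp
  have e2 : (B / n) ^ 4 * ((n ^ 4 : ℕ) : ℝ) = B ^ 4 := by
    push_cast
    field_simp
  rw [e1, e2] at h2
  have e3 : K * D1 * B ^ (2 * r) / n ^ 2 ≤ 1 := by
    rw [div_le_one (by positivity)]
    nlinarith
  have e4 : B ≤ B ^ 4 := le_self_pow₀ hB1 (by norm_num)
  linarith
end
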